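/- arXiv:2302.04207 — 14 statements merged into one kernel-verified Lean document; each statement's English description precedes it below -/
import Mathlib

section
/- (Houston's theorem) Let (C, ⊗, 𝟙) be a braided monoidal category with a zero object, and let X, Y be objects of C. Assume: the product 𝟙 × 𝟙 exists; the coproduct X ⨿ Y exists; the product X × Y exists; for each Z ∈ {X, Y, X ⨿ Y} the canonical comparison map Z ⊗ (𝟙 × 𝟙) → (Z ⊗ 𝟙) × (Z ⊗ 𝟙) is an isomorphism; and the canonical comparison map (X ⊗ (𝟙 × 𝟙)) ⨿ (Y ⊗ (𝟙 × 𝟙)) → (X ⨿ Y) ⊗ (𝟙 × 𝟙) is an isomorphism. Then the canonical morphism X ⨿ Y → X × Y, whose matrix components are 𝟙_X, 0, 0, 𝟙_Y (using the zero morphisms coming from the zero object), is an isomorphism; thus X ⨿ Y is a biproduct of X and Y. -/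
open CategoryTheory CategoryTheory.Limits CategoryTheory.MonoidalCategory

/-!
Write `P = 𝟙 ⨯ 𝟙` and `S = X ⨿ Y`, with inclusions `i`, `j`. The hypotheses on `Z ⊗ P` say that, for
`Z = X, Y, S`, the object `Z ⊗ P` with the two maps `Z ⊗ P ⟶ Z ⊗ 𝟙 ≅ Z` is a product of `Z` with
itself (`exists_lift_tensorPair`, `tensorPair_hom_ext`), naturally in `Z`. The last hypothesis says
that `i ▷ P` and `j ▷ P` exhibit `S ⊗ P` as the coproduct of `X ⊗ P` and `Y ⊗ P`. Hence there is a
map `θ : S ⊗ P ⟶ S` which is "first projection, then `i`" on `X ⊗ P` and "second projection, then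
`j`" on `Y ⊗ P`. The inverse of the canonical map `f : S ⟶ X ⨯ Y` is
`g = ⟨fst ≫ i, snd ≫ j⟩ ≫ θ`.

* `f ≫ g = 𝟙`: on `X` the map `f` followed by the pairing is `⟨i, 0⟩ = ⟨𝟙, 0⟩ ≫ i ▷ P`, which `θ` sends
  to `i`; on `Y` it is `⟨0, j⟩ = ⟨0, 𝟙⟩ ≫ j ▷ P`, which `θ` sends to `j`.
* `g ≫ f = 𝟙`: the map `θ` followed by the retraction `S ⟶ X` equals the first projection followed by
  that retraction, because the two agree on `X ⊗ P` and both vanish on `Y ⊗ P`. Likewise for `Y` and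
  the second projection.
-/

section

variable {C : Type*} [Category C] [MonoidalCategory C] [HasBinaryProduct (𝟙_ C) (𝟙_ C)]

/-- The map `Z ⊗ (𝟙 ⨯ 𝟙) ⟶ Z` induced by the first projection of `𝟙 ⨯ 𝟙`. -/
noncomputable def tensorFst (Z : C) : Z ⊗ (𝟙_ C ⨯ 𝟙_ C) ⟶ Z :=
  Z ◁ (prod.fst : (𝟙_ C ⨯ 𝟙_ C : C) ⟶ 𝟙_ C) ≫ (ρ_ Z).hom

/-- The map `Z ⊗ (𝟙 ⨯ 𝟙) ⟶ Z` induced by the second projection of `𝟙 ⨯ 𝟙`. -/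
noncomputable def tensorSnd (Z : C) : Z ⊗ (𝟙_ C ⨯ 𝟙_ C) ⟶ Z :=
  Z ◁ (prod.snd : (𝟙_ C ⨯ 𝟙_ C : C) ⟶ 𝟙_ C) ≫ (ρ_ Z).hom

lemma whiskerRight_tensorFst {Z W : C} (f : Z ⟶ W) :
    f ▷ (𝟙_ C ⨯ 𝟙_ C) ≫ tensorFst W = tensorFst Z ≫ f := by
  simp only [tensorFst, Category.assoc, ← whisker_exchange_assoc, rightUnitor_naturality]

lemma whiskerRight_tensorSnd {Z W : C} (f : Z ⟶ W) :
    f ▷ (𝟙_ C ⨯ 𝟙_ C) ≫ tensorSnd W = tensorSnd Z ≫ f := by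
  simp only [tensorSnd, Category.assoc, ← whisker_exchange_assoc, rightUnitor_naturality]

/-- Existence half of the universal property making `Z ⊗ (𝟙 ⨯ 𝟙)` a product of `Z` with itself. -/
lemma exists_lift_tensorPair (Z : C) [HasBinaryProduct ((Z ⊗ 𝟙_ C : C)) ((Z ⊗ 𝟙_ C : C))]
    (hZ : IsIso (prod.lift (Z ◁ (prod.fst : (𝟙_ C ⨯ 𝟙_ C : C) ⟶ 𝟙_ C))
                           (Z ◁ (prod.snd : (𝟙_ C ⨯ 𝟙_ C : C) ⟶ 𝟙_ C))))
    {W : C} (a b : W ⟶ Z) :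
    ∃ l : W ⟶ Z ⊗ (𝟙_ C ⨯ 𝟙_ C), l ≫ tensorFst Z = a ∧ l ≫ tensorSnd Z = b := by
  set c := prod.lift (Z ◁ (prod.fst : (𝟙_ C ⨯ 𝟙_ C : C) ⟶ 𝟙_ C))
    (Z ◁ (prod.snd : (𝟙_ C ⨯ 𝟙_ C : C) ⟶ 𝟙_ C)) with hc
  have h1 : tensorFst Z = c ≫ prod.fst ≫ (ρ_ Z).hom := by simp [hc, tensorFst, prod.lift_fst_assoc]
  have h2 : tensorSnd Z = c ≫ prod.snd ≫ (ρ_ Z).hom := by simp [hc, tensorSnd, prod.lift_snd_assoc]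
  refine ⟨prod.lift (a ≫ (ρ_ Z).inv) (b ≫ (ρ_ Z).inv) ≫ inv c, ?_, ?_⟩
  · simp [h1, prod.lift_fst_assoc]
  · simp [h2, prod.lift_snd_assoc]

/-- Uniqueness half of the universal property making `Z ⊗ (𝟙 ⨯ 𝟙)` a product of `Z` with itself. -/
lemma tensorPair_hom_ext (Z : C) [HasBinaryProduct ((Z ⊗ 𝟙_ C : C)) ((Z ⊗ 𝟙_ C : C))]
    (hZ : IsIso (prod.lift (Z ◁ (prod.fst : (𝟙_ C ⨯ 𝟙_ C : C) ⟶ 𝟙_ C))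
                           (Z ◁ (prod.snd : (𝟙_ C ⨯ 𝟙_ C : C) ⟶ 𝟙_ C))))
    {W : C} {l m : W ⟶ Z ⊗ (𝟙_ C ⨯ 𝟙_ C)} (h1 : l ≫ tensorFst Z = m ≫ tensorFst Z)
    (h2 : l ≫ tensorSnd Z = m ≫ tensorSnd Z) : l = m := by
  rw [← cancel_mono (prod.lift (Z ◁ (prod.fst : (𝟙_ C ⨯ 𝟙_ C : C) ⟶ 𝟙_ C))
    (Z ◁ (prod.snd : (𝟙_ C ⨯ 𝟙_ C : C) ⟶ 𝟙_ C)))]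
  simp only [tensorFst, tensorSnd, ← Category.assoc, cancel_mono] at h1 h2
  ext
  · simpa [prod.lift_fst] using h1
  · simpa [prod.lift_snd] using h2

end

/-- Houston's theorem: in a braided monoidal category with a zero object, under the stated
existence and compatibility (comparison maps being isomorphisms) hypotheses, the canonical
map `X ⨿ Y ⟶ X ⨯ Y` with matrix components `𝟙 X, 0, 0, 𝟙 Y` is an isomorphism, so
`X ⨿ Y` is a biproduct of `X` and `Y`. -/
theorem stmt1 {C : Type*} [Category C] [MonoidalCategory C] [BraidedCategory C]
    [HasZeroObject C] [HasZeroMorphisms C]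
    (X Y : C)
    [HasBinaryProduct (𝟙_ C) (𝟙_ C)]
    [HasBinaryCoproduct X Y]
    [HasBinaryProduct X Y]
    [HasBinaryProduct ((X ⊗ 𝟙_ C : C)) ((X ⊗ 𝟙_ C : C))]
    [HasBinaryProduct ((Y ⊗ 𝟙_ C : C)) ((Y ⊗ 𝟙_ C : C))]
    [HasBinaryProduct (((X ⨿ Y) ⊗ 𝟙_ C : C)) (((X ⨿ Y) ⊗ 𝟙_ C : C))]
    [HasBinaryCoproduct ((X ⊗ (𝟙_ C ⨯ 𝟙_ C) : C)) ((Y ⊗ (𝟙_ C ⨯ 𝟙_ C) : C))]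
    (hX : IsIso (prod.lift (X ◁ (prod.fst : (𝟙_ C ⨯ 𝟙_ C : C) ⟶ 𝟙_ C))
                           (X ◁ (prod.snd : (𝟙_ C ⨯ 𝟙_ C : C) ⟶ 𝟙_ C))))
    (hY : IsIso (prod.lift (Y ◁ (prod.fst : (𝟙_ C ⨯ 𝟙_ C : C) ⟶ 𝟙_ C))
                           (Y ◁ (prod.snd : (𝟙_ C ⨯ 𝟙_ C : C) ⟶ 𝟙_ C))))
    (hXY : IsIso (prod.lift ((X ⨿ Y) ◁ (prod.fst : (𝟙_ C ⨯ 𝟙_ C : C) ⟶ 𝟙_ C))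
                            ((X ⨿ Y) ◁ (prod.snd : (𝟙_ C ⨯ 𝟙_ C : C) ⟶ 𝟙_ C))))
    (hco : IsIso (coprod.desc ((coprod.inl : X ⟶ X ⨿ Y) ▷ (𝟙_ C ⨯ 𝟙_ C))
                              ((coprod.inr : Y ⟶ X ⨿ Y) ▷ (𝟙_ C ⨯ 𝟙_ C)))) :
    IsIso (coprod.desc (prod.lift (𝟙 X) (0 : X ⟶ Y)) (prod.lift (0 : Y ⟶ X) (𝟙 Y))) := by
  obtain ⟨lX, lX1, lX2⟩ := exists_lift_tensorPair X hX (𝟙 X) (0 : X ⟶ X)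
  obtain ⟨lY, lY1, lY2⟩ := exists_lift_tensorPair Y hY (0 : Y ⟶ Y) (𝟙 Y)
  obtain ⟨u, u1, u2⟩ := exists_lift_tensorPair (X ⨿ Y) hXY
    ((prod.fst : X ⨯ Y ⟶ X) ≫ coprod.inl) ((prod.snd : X ⨯ Y ⟶ Y) ≫ coprod.inr)
  set i : X ⟶ X ⨿ Y := coprod.inl with hi
  set j : Y ⟶ X ⨿ Y := coprod.inr with hj
  set d := coprod.desc (i ▷ (𝟙_ C ⨯ 𝟙_ C)) (j ▷ (𝟙_ C ⨯ 𝟙_ C)) with hd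
  have d1 : coprod.inl ≫ d = i ▷ (𝟙_ C ⨯ 𝟙_ C) := coprod.inl_desc _ _
  have d2 : coprod.inr ≫ d = j ▷ (𝟙_ C ⨯ 𝟙_ C) := coprod.inr_desc _ _
  obtain ⟨θ, θ1, θ2⟩ : ∃ θ : (X ⨿ Y) ⊗ (𝟙_ C ⨯ 𝟙_ C) ⟶ X ⨿ Y,
      i ▷ (𝟙_ C ⨯ 𝟙_ C) ≫ θ = tensorFst X ≫ i ∧ j ▷ (𝟙_ C ⨯ 𝟙_ C) ≫ θ = tensorSnd Y ≫ j :=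
    ⟨inv d ≫ coprod.desc (tensorFst X ≫ i) (tensorSnd Y ≫ j),
      by simp [← d1, coprod.inl_desc], by simp [← d2, coprod.inr_desc]⟩
  have d_ext : ∀ {W : C} (a b : (X ⨿ Y) ⊗ (𝟙_ C ⨯ 𝟙_ C) ⟶ W),
      i ▷ (𝟙_ C ⨯ 𝟙_ C) ≫ a = i ▷ (𝟙_ C ⨯ 𝟙_ C) ≫ b →
      j ▷ (𝟙_ C ⨯ 𝟙_ C) ≫ a = j ▷ (𝟙_ C ⨯ 𝟙_ C) ≫ b → a = b := by
    intro W a b h1 h2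
    rw [← cancel_epi d]
    apply coprod.hom_ext
    · rw [reassoc_of% d1, reassoc_of% d1, h1]
    · rw [reassoc_of% d2, reassoc_of% d2, h2]
  -- The retractions of `i` and `j`; they are the two components of the canonical map.
  set r : X ⨿ Y ⟶ X := coprod.desc (𝟙 X) 0 with hr
  set s : X ⨿ Y ⟶ Y := coprod.desc 0 (𝟙 Y) with hs
  have ir : i ≫ r = 𝟙 X := coprod.inl_desc _ _
  have jr : j ≫ r = 0 := coprod.inr_desc _ _
  have is : i ≫ s = 0 := coprod.inl_desc _ _
  have js : j ≫ s = 𝟙 Y := coprod.inr_desc _ _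
  -- `θ` agrees with a projection after each retraction, by comparison on both summands.
  have θr : θ ≫ r = tensorFst _ ≫ r := by
    apply d_ext
    · rw [reassoc_of% θ1, reassoc_of% (whiskerRight_tensorFst i)]
    · rw [reassoc_of% θ2, reassoc_of% (whiskerRight_tensorFst j), jr, comp_zero, comp_zero]
  have θs : θ ≫ s = tensorSnd _ ≫ s := by
    apply d_ext
    · rw [reassoc_of% θ1, reassoc_of% (whiskerRight_tensorSnd i), is, comp_zero, comp_zero]
    · rw [reassoc_of% θ2, reassoc_of% (whiskerRight_tensorSnd j)]
  set f : X ⨿ Y ⟶ X ⨯ Y :=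
    coprod.desc (prod.lift (𝟙 X) (0 : X ⟶ Y)) (prod.lift (0 : Y ⟶ X) (𝟙 Y)) with hf
  have f1 : f ≫ prod.fst = r := by apply coprod.hom_ext <;> simp [hf, hr, coprod.inl_desc, coprod.inr_desc, prod.lift_fst]
  have f2 : f ≫ prod.snd = s := by apply coprod.hom_ext <;> simp [hf, hs, coprod.inl_desc, coprod.inr_desc, prod.lift_snd]
  refine ⟨u ≫ θ, ?_, ?_⟩
  · have hX' : i ≫ f ≫ u = lX ≫ i ▷ (𝟙_ C ⨯ 𝟙_ C) := by
      apply tensorPair_hom_ext _ hXY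
      · simp only [Category.assoc, u1, whiskerRight_tensorFst, reassoc_of% f1,
          reassoc_of% ir, reassoc_of% lX1]
      · simp only [Category.assoc, u2, whiskerRight_tensorSnd, reassoc_of% f2,
          reassoc_of% is, reassoc_of% lX2, zero_comp]
    have hY' : j ≫ f ≫ u = lY ≫ j ▷ (𝟙_ C ⨯ 𝟙_ C) := by
      apply tensorPair_hom_ext _ hXY
      · simp only [Category.assoc, u1, whiskerRight_tensorFst, reassoc_of% f1,
          reassoc_of% jr, reassoc_of% lY1, zero_comp]
      · simp only [Category.assoc, u2, whiskerRight_tensorSnd, reassoc_of% f2,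
          reassoc_of% js, reassoc_of% lY2]
    apply coprod.hom_ext
    · change i ≫ f ≫ u ≫ θ = i ≫ 𝟙 _
      rw [reassoc_of% hX', θ1, reassoc_of% lX1, Category.comp_id]
    · change j ≫ f ≫ u ≫ θ = j ≫ 𝟙 _
      rw [reassoc_of% hY', θ2, reassoc_of% lY2, Category.comp_id]
  · apply prod.hom_ext
    · simp only [Category.assoc, f1, θr, reassoc_of% u1, ir, Category.comp_id, Category.id_comp]
    · simp only [Category.assoc, f2, θs, reassoc_of% u2, js, Category.comp_id, Category.id_comp]
end

section
/- Let (C, ⊗, 𝟙) be a braided monoidal category and let T be an object with twisted-trivial braiding, i.e. β_{T,T} = T ◁ t for some endomorphism t : T → T. Then T is symmetric: the composite of β_{T,T} ▷ T followed by T ◁ (β_{T,T})⁻¹ (with associators inserted as needed) equals the identity of T ⊗ T ⊗ T. -/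
open CategoryTheory CategoryTheory.Limits CategoryTheory.MonoidalCategory

/-- An object with twisted-trivial braiding is symmetric:
`(β_{T,T} ▷ T) ≫ (T ◁ β_{T,T}⁻¹)` (with associators inserted) is the identity of
`T ⊗ T ⊗ T`. -/
theorem stmt3 {C : Type*} [Category C] [MonoidalCategory C] [BraidedCategory C]
    (T : C) (t : T ⟶ T) (h : (β_ T T).hom = T ◁ t) :
    ((β_ T T).hom ▷ T) ≫ (α_ T T T).hom ≫ (T ◁ (β_ T T).inv) ≫ (α_ T T T).inv
      = 𝟙 ((T ⊗ T) ⊗ T) := by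
  -- Naturality gives `β ≫ β = β ≫ (t ▷ T)`; cancelling `β` puts the twist on the left factor.
  have h' : (β_ T T).hom = t ▷ T := by
    rw [← cancel_epi (β_ T T).hom, ← BraidedCategory.braiding_naturality_right, ← h]
  -- Both `β ▷ T` and `T ◁ β` are therefore `t` acting on the middle factor.
  have key : (β_ T T).hom ▷ T = (α_ T T T).hom ≫ T ◁ (β_ T T).hom ≫ (α_ T T T).inv := by
    calc (β_ T T).hom ▷ T = (T ◁ t) ▷ T := by rw [h]
      _ = (α_ T T T).hom ≫ T ◁ (t ▷ T) ≫ (α_ T T T).inv := whisker_assoc T t T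
      _ = _ := by rw [← h']
  rw [key]
  simp
end

section
/- Let (C, ⊗, 𝟙) be a braided monoidal category and let T be a symmetric object admitting a right dual Tᘁ, with coevaluation η : 𝟙 → T ⊗ Tᘁ and evaluation ε : Tᘁ ⊗ T → 𝟙 satisfying the triangle identities. Define the Euler characteristic χ := η ≫ (β_{Tᘁ,T})⁻¹ ≫ ε : 𝟙 → 𝟙 and t := ρ_T⁻¹ ≫ (T ◁ χ) ≫ ρ_T : T → T. Then T has t-twisted trivial braiding: β_{T,T} = T ◁ t. -/
/-!
Write `σ = β_{T,T}`. Symmetry says that `σ⁻¹ ⊗ T = T ⊗ σ⁻¹` on `T ⊗ T ⊗ T`. Both sides are closed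
up on the third strand, by `η` at the top and `β_{Td,T}⁻¹ ≫ ε` at the bottom. The left side becomes
`σ⁻¹ ≫ (T ◁ t)`, since the closed strand is then a free loop `χ`. The right side becomes
`T ◁ (partial trace of σ⁻¹)`, and this partial trace is the identity (`partialTrace_braiding_inv`):
pulling `η` through the braiding turns it into the triangle identity. Hence `σ⁻¹ ≫ (T ◁ t) = 𝟙`.
-/

open CategoryTheory CategoryTheory.Limits CategoryTheory.MonoidalCategory

/-- The partial trace of `β_{T,T}⁻¹` along `η` and `β_{Td,T}⁻¹ ≫ ε` is trivial: by the hexagon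
and naturality, `β_{T,T}⁻¹` followed by `β_{Td,T}⁻¹` is `β_{T ⊗ Td, T}⁻¹`, which moves `η` to the
other side of `T`, leaving a zigzag. -/
theorem partialTrace_braiding_inv {C : Type*} [Category C] [MonoidalCategory C]
    [BraidedCategory C] (T Td : C) (η : 𝟙_ C ⟶ (T ⊗ Td : C)) (ε : ((Td ⊗ T : C)) ⟶ 𝟙_ C)
    (t1 : η ▷ T ≫ (α_ T Td T).hom ≫ T ◁ ε = (λ_ T).hom ≫ (ρ_ T).inv) :
    T ◁ η ≫ (α_ T T Td).inv ≫ (β_ T T).inv ▷ Td ≫ (α_ T T Td).hom ≫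
      T ◁ (β_ Td T).inv ≫ T ◁ ε = 𝟙 _ := by
  have h := BraidedCategory.braiding_inv_naturality_right T η
  rw [BraidedCategory.braiding_tensor_left_inv, braiding_inv_tensorUnit_left] at h
  have h' := congrArg (fun f => f ≫ (α_ T Td T).hom ≫ T ◁ ε) h
  simp only [Category.assoc, Iso.inv_hom_id_assoc, t1] at h'
  simpa using h'

/-- The interchange law on `T ⊗ T ⊗ T ⊗ Td`, with symmetry used to move `β_{T,T}⁻¹` from the
first two strands to the second and third. -/
theorem braiding_inv_whisker_shift {C : Type*} [Category C] [MonoidalCategory C]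
    [BraidedCategory C] (T Td : C) (η : 𝟙_ C ⟶ (T ⊗ Td : C))
    (hs : (β_ T T).inv ▷ T = (α_ T T T).hom ≫ T ◁ (β_ T T).inv ≫ (α_ T T T).inv) :
    (β_ T T).inv ≫ T ◁ (ρ_ T).inv ≫ T ◁ T ◁ η =
      T ◁ (ρ_ T).inv ≫ T ◁ (T ◁ η ≫ (α_ T T Td).inv ≫ (β_ T T).inv ▷ Td ≫ (α_ T T Td).hom) := by
  calc _ = T ◁ (ρ_ T).inv ≫ (α_ T T _).inv ≫ ((β_ T T).inv ▷ 𝟙_ C ≫ (T ⊗ T) ◁ η) ≫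
        (α_ T T _).hom := by monoidal
    _ = T ◁ (ρ_ T).inv ≫ T ◁ T ◁ η ≫ T ◁ (α_ T T Td).inv ≫ (α_ T (T ⊗ T) Td).inv ≫
        (α_ T T T).inv ▷ Td ≫ ((β_ T T).inv ▷ T) ▷ Td ≫ (α_ (T ⊗ T) T Td).hom ≫
        (α_ T T _).hom := by
      rw [← whisker_exchange]; monoidal
    _ = _ := by rw [hs]; monoidal

/-- A symmetric object `T` with a right dual `Td` has `t`-twisted trivial braiding, where
`t` is multiplication by the Euler characteristic `χ = η ≫ β_{Td,T}⁻¹ ≫ ε`. -/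
theorem stmt4 {C : Type*} [Category C] [MonoidalCategory C] [BraidedCategory C]
    (T Td : C) (η : 𝟙_ C ⟶ (T ⊗ Td : C)) (ε : ((Td ⊗ T : C)) ⟶ 𝟙_ C)
    (t1 : η ▷ T ≫ (α_ T Td T).hom ≫ T ◁ ε = (λ_ T).hom ≫ (ρ_ T).inv)
    (t2 : Td ◁ η ≫ (α_ Td T Td).inv ≫ ε ▷ Td = (ρ_ Td).hom ≫ (λ_ Td).inv)
    (hsymm : ((β_ T T).hom ▷ T) ≫ (α_ T T T).hom ≫ (T ◁ (β_ T T).inv) ≫ (α_ T T T).inv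
      = 𝟙 ((T ⊗ T) ⊗ T)) :
    (β_ T T).hom = T ◁ ((ρ_ T).inv ≫ (T ◁ (η ≫ (β_ Td T).inv ≫ ε)) ≫ (ρ_ T).hom) := by
  have hs : (β_ T T).inv ▷ T = (α_ T T T).hom ≫ T ◁ (β_ T T).inv ≫ (α_ T T T).inv := by
    rw [← cancel_epi ((β_ T T).hom ▷ T), hsymm, hom_inv_whiskerRight]
  rw [← cancel_epi (β_ T T).inv, Iso.inv_hom_id]
  have h1 := braiding_inv_whisker_shift T Td η hs
  have h2 := partialTrace_braiding_inv T Td η ε t1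
  symm
  calc _ = ((β_ T T).inv ≫ T ◁ (ρ_ T).inv ≫ T ◁ T ◁ η) ≫ T ◁ (T ◁ (β_ Td T).inv ≫ T ◁ ε) ≫
        T ◁ (ρ_ T).hom := by simp
    _ = T ◁ (ρ_ T).inv ≫ T ◁ (T ◁ η ≫ (α_ T T Td).inv ≫ (β_ T T).inv ▷ Td ≫ (α_ T T Td).hom ≫
        T ◁ (β_ Td T).inv ≫ T ◁ ε) ≫ T ◁ (ρ_ T).hom := by
      rw [h1]; simp only [MonoidalCategory.whiskerLeft_comp, Category.assoc]
    _ = _ := by rw [h2]; simp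
end

section
/- Let (C, ⊗, 𝟙) be a braided monoidal category and let (E, r) be a closed idempotent, i.e. r : 𝟙 → E is a morphism such that r ▷ E : 𝟙 ⊗ E → E ⊗ E is an isomorphism. Then λ_E⁻¹ ≫ (r ▷ E) = ρ_E⁻¹ ≫ (E ◁ r) as morphisms E → E ⊗ E. -/
/-!
Both sides agree after precomposition with `r`, by the interchange law. It remains to see that `r`
is an epimorphism with respect to maps `f : E ⟶ X` into objects `X` for which `r ▷ X` is invertible
(such as `X = E ⊗ E`). Naturality of `r ▷ -` shows that such an `f` is determined by `E ◁ f`;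
the braiding carries the invertibility of `r ▷ E` over to `E ◁ r`, so `E ◁ f` is determined by
`E ◁ (r ≫ f)`.
-/

open CategoryTheory CategoryTheory.Limits CategoryTheory.MonoidalCategory

theorem isIso_whiskerLeft_of_isIso_whiskerRight {C : Type*} [Category C] [MonoidalCategory C]
    [BraidedCategory C] (E : C) (r : 𝟙_ C ⟶ E) (h : IsIso (r ▷ E)) : IsIso (E ◁ r) := by
  have e : E ◁ r = (β_ E (𝟙_ C)).hom ≫ r ▷ E ≫ (β_ E E).inv := by
    rw [← Category.assoc, Iso.eq_comp_inv, BraidedCategory.braiding_naturality_right]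
  rw [e]
  infer_instance

/-- Maps out of `E` into an `E`-local object are determined by their restriction along `r`. -/
theorem hom_ext_of_isIso_whiskerRight {C : Type*} [Category C] [MonoidalCategory C]
    {E X : C} (r : 𝟙_ C ⟶ E) (hE : IsIso (E ◁ r)) (hX : IsIso (r ▷ X)) {f g : E ⟶ X}
    (hfg : r ≫ f = r ≫ g) : f = g := by
  have h₁ : E ◁ f = E ◁ g := by
    rw [← cancel_epi (E ◁ r), ← whiskerLeft_comp, ← whiskerLeft_comp, hfg]
  have h₂ : 𝟙_ C ◁ f = 𝟙_ C ◁ g := by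
    rw [← cancel_mono (r ▷ X), whisker_exchange, whisker_exchange, h₁]
  simpa [id_whiskerLeft] using h₂

/-- For a closed idempotent `(E, r)` in a braided monoidal category,
`λ_E⁻¹ ≫ (r ▷ E) = ρ_E⁻¹ ≫ (E ◁ r)` as morphisms `E ⟶ E ⊗ E`. -/
theorem stmt5 {C : Type*} [Category C] [MonoidalCategory C] [BraidedCategory C]
    (E : C) (r : 𝟙_ C ⟶ E) (h : IsIso (r ▷ E)) :
    (λ_ E).inv ≫ (r ▷ E) = (ρ_ E).inv ≫ (E ◁ r) := by
  have hX : IsIso (r ▷ (E ⊗ E)) := by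
    rw [whiskerRight_tensor]
    infer_instance
  refine hom_ext_of_isIso_whiskerRight r (isIso_whiskerLeft_of_isIso_whiskerRight E r h) hX ?_
  rw [leftUnitor_inv_naturality_assoc, rightUnitor_inv_naturality_assoc, whisker_exchange,
    unitors_inv_equal]
end

section
/- Let (C, ⊗, 𝟙) be a braided monoidal category. If (E, r) is a closed idempotent (r : 𝟙 → E with r ▷ E an isomorphism) or (E, i) is an open idempotent (i : E → 𝟙 with i ▷ E an isomorphism), then E has trivial braiding: β_{E,E} = 𝟙_{E ⊗ E}. -/
/-!
For a closed idempotent `r : 𝟙 ⟶ E`, naturality of the braiding says that composing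
`a = λ⁻¹ ≫ r ▷ E : E ⟶ E ⊗ E` with `β_ E E` gives `b = ρ⁻¹ ≫ E ◁ r`. As `a` is an isomorphism,
it is enough to show `a = b`. Both restrict along `r` to `r ⊗ r`, and precomposition with `r` is
injective on maps `E ⟶ E ⊗ E` (`ClosedIdem.hom_ext`): if `r ≫ f = r ≫ g` then `f ▷ E = g ▷ E`
because `r ▷ E` is epi, and `f` is recovered from `f ▷ E` through the isomorphism
`X ◁ r : X ⊗ 𝟙 ⟶ X ⊗ E`, where `X = E ⊗ E`. The open case is formally dual.
-/

open CategoryTheory CategoryTheory.Limits CategoryTheory.MonoidalCategory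

lemma ClosedIdem.isIso_whiskerLeft {C : Type*} [Category C] [MonoidalCategory C]
    [BraidedCategory C] {E : C} (r : 𝟙_ C ⟶ E) [IsIso (r ▷ E)] : IsIso (E ◁ r) := by
  have h : E ◁ r = (β_ (𝟙_ C) E).inv ≫ r ▷ E ≫ (β_ E E).hom := by
    rw [BraidedCategory.braiding_naturality_left, Iso.inv_hom_id_assoc]
  rw [h]; infer_instance

lemma OpenIdem.isIso_whiskerLeft {C : Type*} [Category C] [MonoidalCategory C]
    [BraidedCategory C] {E : C} (i : E ⟶ 𝟙_ C) [IsIso (i ▷ E)] : IsIso (E ◁ i) := by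
  have h : E ◁ i = (β_ E E).inv ≫ i ▷ E ≫ (β_ (𝟙_ C) E).hom := by
    rw [BraidedCategory.braiding_naturality_left, Iso.inv_hom_id_assoc]
  rw [h]; infer_instance

lemma ClosedIdem.hom_ext {C : Type*} [Category C] [MonoidalCategory C]
    [BraidedCategory C] {E : C} (r : 𝟙_ C ⟶ E) [IsIso (r ▷ E)] {f g : E ⟶ E ⊗ E}
    (h : r ≫ f = r ≫ g) : f = g := by
  have := ClosedIdem.isIso_whiskerLeft r
  have h1 : f ▷ E = g ▷ E := by
    rw [← cancel_epi (r ▷ E), ← comp_whiskerRight, ← comp_whiskerRight, h]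
  have : IsIso ((E ⊗ E) ◁ r) := by rw [tensor_whiskerLeft]; infer_instance
  have h2 : f ▷ 𝟙_ C = g ▷ 𝟙_ C := by
    rw [← cancel_mono ((E ⊗ E) ◁ r), ← whisker_exchange, ← whisker_exchange, h1]
  simpa using h2

/-- Dual of `ClosedIdem.hom_ext`: postcomposition with `i` is injective on maps `E ⊗ E ⟶ E`. -/
lemma OpenIdem.hom_ext {C : Type*} [Category C] [MonoidalCategory C]
    [BraidedCategory C] {E : C} (i : E ⟶ 𝟙_ C) [IsIso (i ▷ E)] {f g : E ⊗ E ⟶ E}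
    (h : f ≫ i = g ≫ i) : f = g := by
  have := OpenIdem.isIso_whiskerLeft i
  have h1 : f ▷ E = g ▷ E := by
    rw [← cancel_mono (i ▷ E), ← comp_whiskerRight, ← comp_whiskerRight, h]
  have : IsIso ((E ⊗ E) ◁ i) := by rw [tensor_whiskerLeft]; infer_instance
  have h2 : f ▷ 𝟙_ C = g ▷ 𝟙_ C := by
    rw [← cancel_epi ((E ⊗ E) ◁ i), whisker_exchange, whisker_exchange, h1]
  simpa using h2

/-- A closed idempotent (some `r : 𝟙 ⟶ E` with `r ▷ E` an isomorphism) or an open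
idempotent (some `i : E ⟶ 𝟙` with `i ▷ E` an isomorphism) has trivial braiding. -/
theorem stmt6 {C : Type*} [Category C] [MonoidalCategory C] [BraidedCategory C]
    (E : C)
    (h : (∃ r : 𝟙_ C ⟶ E, IsIso (r ▷ E)) ∨ (∃ i : E ⟶ 𝟙_ C, IsIso (i ▷ E))) :
    (β_ E E).hom = 𝟙 (E ⊗ E) := by
  rcases h with ⟨r, hr⟩ | ⟨i, hi⟩
  · have key : (λ_ E).inv ≫ r ▷ E = (ρ_ E).inv ≫ E ◁ r := by
      apply ClosedIdem.hom_ext r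
      rw [leftUnitor_inv_naturality_assoc, rightUnitor_inv_naturality_assoc, whisker_exchange,
        unitors_inv_equal]
    rw [← cancel_epi (r ▷ E), ← cancel_epi (λ_ E).inv,
      BraidedCategory.braiding_naturality_left, leftUnitor_inv_braiding_assoc, Category.comp_id,
      key]
  · have key : i ▷ E ≫ (λ_ E).hom = E ◁ i ≫ (ρ_ E).hom := by
      apply OpenIdem.hom_ext i
      rw [Category.assoc, Category.assoc, ← leftUnitor_naturality, ← rightUnitor_naturality,
        whisker_exchange_assoc, unitors_equal]
    have := OpenIdem.isIso_whiskerLeft i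
    rw [← cancel_mono (E ◁ i), ← cancel_mono (ρ_ E).hom, Category.id_comp,
      ← BraidedCategory.braiding_naturality_left, Category.assoc, braiding_rightUnitor, key]
end

section
/- Let (C, ⊗, 𝟙) be a braided monoidal category and let E be an object that admits both the structure of a closed idempotent, via some r : 𝟙 → E with r ▷ E an isomorphism, and the structure of an open idempotent, via some i₀ : E → 𝟙 with i₀ ▷ E an isomorphism. Then there exists a morphism i : E → 𝟙 such that (E, r, i) is a clopen idempotent, i.e. i ≫ r = 𝟙_E and (r ≫ i) ▷ E = 𝟙_{𝟙 ⊗ E}. -/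
/-!
Suppressing unitors, the interchange law rewrites `i₀ ≫ r : E ⟶ E` as `E ◁ r ≫ i₀ ▷ E`. The second
factor is invertible by hypothesis, the first because the braiding conjugates it to `r ▷ E`, so
`f = i₀ ≫ r` is an isomorphism. Put `i = f⁻¹ ≫ i₀`; then `i ≫ r = 𝟙 E`. Consequently `r ≫ i` is
idempotent, and so is `(r ≫ i) ▷ E`. The latter is also invertible, being a composite of `r ▷ E`,
`f⁻¹ ▷ E` and `i₀ ▷ E`, and an invertible idempotent is the identity.
-/

open CategoryTheory CategoryTheory.Limits CategoryTheory.MonoidalCategory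

/-- If `E` admits both a closed idempotent structure (via `r`) and an open idempotent
structure (via some `i₀`), then there is `i : E ⟶ 𝟙` making `(E, r, i)` a clopen
idempotent. -/
theorem stmt7 {C : Type*} [Category C] [MonoidalCategory C] [BraidedCategory C]
    (E : C) (r : 𝟙_ C ⟶ E) (hr : IsIso (r ▷ E))
    (i₀ : E ⟶ 𝟙_ C) (hi₀ : IsIso (i₀ ▷ E)) :
    ∃ i : E ⟶ 𝟙_ C, i ≫ r = 𝟙 E ∧ (r ≫ i) ▷ E = 𝟙 ((𝟙_ C ⊗ E : C)) := by
  have hEr : IsIso (E ◁ r) := by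
    have h : E ◁ r = (β_ (𝟙_ C) E).inv ≫ r ▷ E ≫ (β_ E E).hom := by
      rw [BraidedCategory.braiding_naturality_left, Iso.inv_hom_id_assoc]
    rw [h]
    infer_instance
  have hf : IsIso (i₀ ≫ r) := by
    have h : i₀ ≫ r = (ρ_ E).inv ≫ E ◁ r ≫ i₀ ▷ E ≫ (λ_ E).hom := by
      rw [whisker_exchange_assoc, leftUnitor_naturality, unitors_equal,
        rightUnitor_naturality_assoc, Iso.inv_hom_id_assoc]
    rw [h]
    infer_instance
  have hi : (inv (i₀ ≫ r) ≫ i₀) ≫ r = 𝟙 E := by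
    rw [Category.assoc, IsIso.inv_hom_id]
  refine ⟨inv (i₀ ≫ r) ≫ i₀, hi, ?_⟩
  have hiso : IsIso ((r ≫ inv (i₀ ≫ r) ≫ i₀) ▷ E) := by
    rw [comp_whiskerRight, comp_whiskerRight]
    infer_instance
  rw [← cancel_epi ((r ≫ inv (i₀ ≫ r) ≫ i₀) ▷ E), ← comp_whiskerRight, Category.comp_id,
    Category.assoc, ← Category.assoc _ r, hi, Category.id_comp]
end

section
/- Let (C, ⊗, 𝟙) be a braided monoidal category, let E be an object and r : 𝟙 → E a morphism. If i, i' : E → 𝟙 are two morphisms such that both (E, r, i) and (E, r, i') are clopen idempotents, then i = i'. (A clopen structure compatible with a given closed structure is unique.) -/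
/-!
The endomorphisms `r ≫ i` and `r ≫ i'` of the unit satisfy
`(r ≫ i) ≫ (r ≫ i') = r ≫ i'` and `(r ≫ i') ≫ (r ≫ i) = r ≫ i` by the splitting equations.
Endomorphisms of the unit of any monoidal category commute, so `r ≫ i = r ≫ i'`, and precomposing
with the section `i` of `r` gives `i = i'`.
-/

open CategoryTheory CategoryTheory.Limits CategoryTheory.MonoidalCategory

/-- Endomorphisms of the monoidal unit commute: whiskering `f` on the right and `g` on the left
identifies the two composites through the interchange law (Eckmann-Hilton). -/
theorem unit_end_comm {C : Type*} [Category C] [MonoidalCategory C] (f g : 𝟙_ C ⟶ 𝟙_ C) :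
    f ≫ g = g ≫ f := by
  have hf : f = (ρ_ (𝟙_ C)).inv ≫ f ▷ 𝟙_ C ≫ (ρ_ (𝟙_ C)).hom := by simp
  have hg : g = (ρ_ (𝟙_ C)).inv ≫ 𝟙_ C ◁ g ≫ (ρ_ (𝟙_ C)).hom := by
    rw [← unitors_equal, ← unitors_inv_equal]
    simp
  rw [hf, hg]
  simp only [Category.assoc, Iso.hom_inv_id_assoc]
  rw [← whisker_exchange_assoc]

/-- Uniqueness of clopen structure compatible with a given closed structure: if both
`(E, r, i)` and `(E, r, i')` are clopen idempotents, then `i = i'`. -/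
theorem stmt8 {C : Type*} [Category C] [MonoidalCategory C] [BraidedCategory C]
    (E : C) (r : 𝟙_ C ⟶ E) (i i' : E ⟶ 𝟙_ C)
    (h1 : i ≫ r = 𝟙 E) (h2 : (r ≫ i) ▷ E = 𝟙 ((𝟙_ C ⊗ E : C)))
    (h1' : i' ≫ r = 𝟙 E) (h2' : (r ≫ i') ▷ E = 𝟙 ((𝟙_ C ⊗ E : C))) :
    i = i' := by
  have h : r ≫ i' = r ≫ i := by
    simpa [reassoc_of% h1, reassoc_of% h1'] using unit_end_comm (r ≫ i) (r ≫ i')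
  calc i = i ≫ r ≫ i := by rw [reassoc_of% h1]
    _ = i ≫ r ≫ i' := by rw [h]
    _ = i' := by rw [reassoc_of% h1]
end

section
/- Let (C, ⊗, 𝟙) be a braided monoidal category and let (E, r) be a closed idempotent (r : 𝟙 → E with r ▷ E an isomorphism) such that E admits a right dual. Then there exists a morphism i : E → 𝟙 such that (E, r, i) is a clopen idempotent, i.e. i ≫ r = 𝟙_E and (r ≫ i) ▷ E = 𝟙_{𝟙 ⊗ E}. -/
open CategoryTheory CategoryTheory.Limits CategoryTheory.MonoidalCategory

/-!
Call `X` local when `r ▷ X` is an isomorphism. Local objects are stable under `- ⊗ Y` and under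
isomorphism, and for a retract `X` of a local object `r ▷ X` still has a section
(`exists_section_whiskerRight_of_retract`).
The dual `D` is a retract of `(D ⊗ E) ⊗ D` by the second triangle identity, and the latter object
is local because the braiding identifies `D ⊗ E` with `E ⊗ D`. Hence `η : 𝟙 ⟶ E ⊗ D` lifts along
`r ▷ D` to some `u : 𝟙 ⟶ D`. Let `i` be the composite of `u ▷ E` and `ε`. By the interchange law
`i ≫ r` is the composite `η ▷ E ≫ α ≫ E ◁ ε` up to unitors, which is the identity by the first
triangle identity. Finally `i ▷ E` is a one-sided inverse of the isomorphism `r ▷ E`, hence a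
two-sided one.
-/

theorem isIso_whiskerRight_of_iso {C : Type*} [Category C] [MonoidalCategory C]
    {A B X Y : C} (r : A ⟶ B) (e : X ≅ Y) (h : IsIso (r ▷ X)) : IsIso (r ▷ Y) := by
  have : r ▷ Y = A ◁ e.inv ≫ r ▷ X ≫ B ◁ e.hom := by
    rw [← whisker_exchange, ← whiskerLeft_comp_assoc]
    simp
  rw [this]
  infer_instance

theorem isIso_whiskerRight_tensor {C : Type*} [Category C] [MonoidalCategory C]
    {A B X : C} (r : A ⟶ B) (Y : C) (h : IsIso (r ▷ X)) : IsIso (r ▷ (X ⊗ Y)) := by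
  rw [whiskerRight_tensor]
  infer_instance

theorem exists_section_whiskerRight_of_retract {C : Type*} [Category C] [MonoidalCategory C]
    {A B X Y : C} (r : A ⟶ B) (s : X ⟶ Y) (p : Y ⟶ X) (hsp : s ≫ p = 𝟙 X)
    (h : IsIso (r ▷ Y)) : ∃ t : B ⊗ X ⟶ A ⊗ X, t ≫ r ▷ X = 𝟙 (B ⊗ X) := by
  refine ⟨B ◁ s ≫ inv (r ▷ Y) ≫ A ◁ p, ?_⟩
  simp only [Category.assoc, whisker_exchange, IsIso.inv_hom_id_assoc]
  rw [← whiskerLeft_comp, hsp, whiskerLeft_id]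

/-- A closed idempotent `(E, r)` such that `E` admits a right dual extends to a clopen
idempotent: there exists `i : E ⟶ 𝟙` with `i ≫ r = 𝟙 E` and `(r ≫ i) ▷ E = 𝟙`. -/
theorem stmt10 {C : Type*} [Category C] [MonoidalCategory C] [BraidedCategory C]
    (E : C) (r : 𝟙_ C ⟶ E) (hr : IsIso (r ▷ E))
    (D : C) (η : 𝟙_ C ⟶ (E ⊗ D : C)) (ε : ((D ⊗ E : C)) ⟶ 𝟙_ C)
    (t1 : η ▷ E ≫ (α_ E D E).hom ≫ E ◁ ε = (λ_ E).hom ≫ (ρ_ E).inv)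
    (t2 : D ◁ η ≫ (α_ D E D).inv ≫ ε ▷ D = (ρ_ D).hom ≫ (λ_ D).inv) :
    ∃ i : E ⟶ 𝟙_ C, i ≫ r = 𝟙 E ∧ (r ≫ i) ▷ E = 𝟙 ((𝟙_ C ⊗ E : C)) := by
  have hloc : IsIso (r ▷ ((D ⊗ E) ⊗ D)) :=
    isIso_whiskerRight_tensor r D
      (isIso_whiskerRight_of_iso r (β_ E D) (isIso_whiskerRight_tensor r D hr))
  obtain ⟨t, ht⟩ := exists_section_whiskerRight_of_retract r
    ((ρ_ D).inv ≫ D ◁ η ≫ (α_ D E D).inv) (ε ▷ D ≫ (λ_ D).hom)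
    (by
      have := (ρ_ D).inv ≫= t2 =≫ (λ_ D).hom
      simpa using this) hloc
  -- `u` is the lift of `η` along `r ▷ D`
  obtain ⟨u, hu⟩ : ∃ u : 𝟙_ C ⟶ D, u ≫ (λ_ D).inv ≫ r ▷ D = η :=
    ⟨η ≫ t ≫ (λ_ D).hom, by simp [ht]⟩
  have key : ((λ_ E).inv ≫ u ▷ E ≫ ε) ≫ r = 𝟙 E := by
    have interchange : ε ≫ r =
        (λ_ D).inv ▷ E ≫ r ▷ D ▷ E ≫ (α_ E D E).hom ≫ E ◁ ε ≫ (ρ_ E).hom := by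
      have h := whisker_exchange r ε
      rw [whiskerRight_tensor] at h
      have h2 := (α_ (𝟙_ C) D E).hom ≫= h =≫ (ρ_ E).hom
      simp only [Category.assoc, Iso.hom_inv_id_assoc] at h2
      rw [← h2]
      simp [← unitors_equal]
    have h1 : (λ_ E).inv ≫ (η ▷ E ≫ (α_ E D E).hom ≫ E ◁ ε) ≫ (ρ_ E).hom = 𝟙 E := by
      rw [t1]; simp
    rw [← hu] at h1
    simpa [interchange] using h1
  refine ⟨_, key, ?_⟩
  rw [comp_whiskerRight, ← cancel_mono (r ▷ E), Category.assoc, ← comp_whiskerRight, key]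
  simp
end

section
/- Let (C, ⊗, 𝟙) be a braided monoidal category, let T be an object with t-twisted trivial braiding (β_{T,T} = T ◁ t), and suppose given a duality datum consisting of an object T^∨ together with η : 𝟙 → T^∨ ⊗ T and ε : T ⊗ T^∨ → 𝟙 satisfying the triangle identities. Define r := η ≫ (T^∨ ◁ t) : 𝟙 → T^∨ ⊗ T and i := β_{T^∨,T} ≫ ε : T^∨ ⊗ T → 𝟙. Then (T^∨ ⊗ T, r, i) is a clopen idempotent: i ≫ r = 𝟙_{T^∨ ⊗ T} and (r ≫ i) ▷ (T^∨ ⊗ T) = 𝟙_{𝟙 ⊗ (T^∨ ⊗ T)}. -/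
open CategoryTheory CategoryTheory.Limits CategoryTheory.MonoidalCategory

/-!
For `i ≫ r = 𝟙`, duality identifies an endomorphism `f` of `Tv ⊗ T` with its transpose
`T ⊗ (Tv ⊗ T) ⟶ T`, obtained by contracting `T ◁ f` with `ε`. By a triangle identity the transpose
of `i ≫ r` is `(T ◁ i) ≫ t`. Sliding `t` in front of `ε` and writing `t ▷ T = β_{T,T}`, the hexagon
turns this into `β_{T ⊗ Tv, T} ≫ (T ◁ ε)`, which by naturality of the braiding is `ε ▷ T`,
the transpose of the identity.

The second identity is formal: endomorphisms of the unit satisfy `e ▷ 𝟙_ C = 𝟙_ C ◁ e`, so both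
sides agree after composing with `𝟙_ C ◁ i`, which is a split monomorphism.
-/

/-- Since `β_{T,T} = T ◁ t` is invertible, naturality of the braiding moves `t` to the other
tensor factor. -/
lemma whiskerRight_eq_braiding {C : Type*} [Category C] [MonoidalCategory C] [BraidedCategory C]
    {T : C} {t : T ⟶ T} (htt : (β_ T T).hom = T ◁ t) : t ▷ T = (β_ T T).hom := by
  have h : (β_ T T).hom ≫ t ▷ T = (β_ T T).hom ≫ T ◁ t := by
    rw [← BraidedCategory.braiding_naturality_right, htt]
  rw [htt]
  exact (cancel_epi _).1 h

/-- The transpose of `i ≫ r` equals the transpose of the identity, where `i = β_{Tv,T} ≫ ε`. -/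
lemma whiskerLeft_braiding_comp_twist {C : Type*} [Category C] [MonoidalCategory C]
    [BraidedCategory C] {T Tv : C} {t : T ⟶ T} (htt : (β_ T T).hom = T ◁ t)
    (ε : T ⊗ Tv ⟶ 𝟙_ C) :
    T ◁ ((β_ Tv T).hom ≫ ε) ≫ (ρ_ T).hom ≫ t = (α_ T Tv T).inv ≫ ε ▷ T ≫ (λ_ T).hom := by
  have hslide : T ◁ ε ≫ (ρ_ T).hom ≫ t
      = (α_ T T Tv).inv ≫ t ▷ T ▷ Tv ≫ (α_ T T Tv).hom ≫ T ◁ ε ≫ (ρ_ T).hom := by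
    rw [← rightUnitor_naturality, whisker_exchange_assoc]
    simp
  have hnat := BraidedCategory.braiding_naturality_left ε T
  rw [BraidedCategory.braiding_tensor_left_hom, braiding_tensorUnit_left] at hnat
  rw [whiskerLeft_comp, Category.assoc, hslide, whiskerRight_eq_braiding htt]
  have h := (α_ T Tv T).inv ≫= hnat =≫ (ρ_ T).hom
  simpa using h.symm

/-- A retract `E` of the unit object is fixed by the associated idempotent `r ≫ i` of the unit. -/
lemma whiskerRight_retract_unit {C : Type*} [Category C] [MonoidalCategory C]
    {E : C} (r : 𝟙_ C ⟶ E) (i : E ⟶ 𝟙_ C) (h : i ≫ r = 𝟙 E) :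
    (r ≫ i) ▷ E = 𝟙 (𝟙_ C ⊗ E) := by
  have hunit : (r ≫ i) ▷ 𝟙_ C = 𝟙_ C ◁ (r ≫ i) := by
    simp only [id_whiskerLeft, whiskerRight_id, unitors_equal, unitors_inv_equal]
  have hi : (r ≫ i) ▷ E ≫ 𝟙_ C ◁ i = 𝟙_ C ◁ i := by
    rw [← whisker_exchange, hunit, ← whiskerLeft_comp, reassoc_of% h]
  calc (r ≫ i) ▷ E = (r ≫ i) ▷ E ≫ 𝟙_ C ◁ i ≫ 𝟙_ C ◁ r := by
        rw [← whiskerLeft_comp, h, whiskerLeft_id, Category.comp_id]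
    _ = 𝟙 _ := by rw [reassoc_of% hi, ← whiskerLeft_comp, h, whiskerLeft_id]

/-- If `T` has `t`-twisted trivial braiding and a duality datum
`(Tv, η : 𝟙 ⟶ Tv ⊗ T, ε : T ⊗ Tv ⟶ 𝟙)`, then `(Tv ⊗ T, r, i)` with
`r = η ≫ (Tv ◁ t)` and `i = β_{Tv,T} ≫ ε` is a clopen idempotent. -/
theorem stmt11 {C : Type*} [Category C] [MonoidalCategory C] [BraidedCategory C]
    (T Tv : C) (t : T ⟶ T) (htt : (β_ T T).hom = T ◁ t)
    (η : 𝟙_ C ⟶ (Tv ⊗ T : C)) (ε : ((T ⊗ Tv : C)) ⟶ 𝟙_ C)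
    (t1 : η ▷ Tv ≫ (α_ Tv T Tv).hom ≫ Tv ◁ ε = (λ_ Tv).hom ≫ (ρ_ Tv).inv)
    (t2 : T ◁ η ≫ (α_ T Tv T).inv ≫ ε ▷ T = (ρ_ T).hom ≫ (λ_ T).inv) :
    ((β_ Tv T).hom ≫ ε) ≫ (η ≫ (Tv ◁ t)) = 𝟙 ((Tv ⊗ T : C)) ∧
    ((η ≫ (Tv ◁ t)) ≫ ((β_ Tv T).hom ≫ ε)) ▷ (Tv ⊗ T)
      = 𝟙 ((𝟙_ C ⊗ (Tv ⊗ T) : C)) := by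
  have hir : ((β_ Tv T).hom ≫ ε) ≫ (η ≫ (Tv ◁ t)) = 𝟙 (Tv ⊗ T) := by
    letI : ExactPairing Tv T := ⟨η, ε, t2, t1⟩
    apply (tensorLeftHomEquiv (Tv ⊗ T) Tv T T).symm.injective
    change T ◁ (((β_ Tv T).hom ≫ ε) ≫ η ≫ Tv ◁ t) ≫ (α_ T Tv T).inv ≫ ε ▷ T ≫ (λ_ T).hom
      = T ◁ 𝟙 (Tv ⊗ T) ≫ (α_ T Tv T).inv ≫ ε ▷ T ≫ (λ_ T).hom
    have hη : T ◁ (η ≫ Tv ◁ t) ≫ (α_ T Tv T).inv ≫ ε ▷ T ≫ (λ_ T).hom = (ρ_ T).hom ≫ t := by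
      rw [whiskerLeft_comp, Category.assoc, associator_inv_naturality_right_assoc,
        whisker_exchange_assoc, leftUnitor_naturality]
      have h := t2 =≫ ((λ_ T).hom ≫ t)
      simpa only [Category.assoc, Iso.inv_hom_id_assoc] using h
    rw [whiskerLeft_comp, Category.assoc, hη, whiskerLeft_braiding_comp_twist htt,
      whiskerLeft_id, Category.id_comp]
  exact ⟨hir, whiskerRight_retract_unit _ _ hir⟩
end

section
/- Let (C, ⊗, 𝟙) be a braided monoidal category, let T be an object with t-twisted trivial braiding (β_{T,T} = T ◁ t), and suppose given a duality datum (T^∨, η : 𝟙 → T^∨ ⊗ T, ε : T ⊗ T^∨ → 𝟙) satisfying the triangle identities. Set r := η ≫ (T^∨ ◁ t) : 𝟙 → T^∨ ⊗ T. Then for an object X of C, the morphism λ_X⁻¹ ≫ (r ▷ X) : X → (T^∨ ⊗ T) ⊗ X is an isomorphism if and only if there exists an object Z with X isomorphic to T ⊗ Z. -/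
/-!
Only the implication from `X ≅ T ⊗ Z` to stability has content: conversely, a stable `X` is
isomorphic to `(Tv ⊗ T) ⊗ X ≅ T ⊗ (Tv ⊗ X)` by the braiding of `Tv` with `T`.

Naturality of the braiding gives `T ◁ t = t ▷ T`. Sliding `η` through a strand `T` and using that
the crossing of two strands `T` is `t`, the map `T ◁ η` becomes, up to associators and unitors,
both the composite of `r ▷ T` with the isomorphism `β_{Tv,T} ▷ T` (`slide_left`) and the composite
`t ≫ (c ▷ T)`, where `c = η ≫ β_{Tv,T} : 𝟙 → T ⊗ Tv` (`slide_right`). Inserting the second form in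
the triangle identity for `T` shows that the scalar `c ≫ ε`, acting on `T`, is inverse to `t`
(`isIso_twist`). Inserting it in the triangle identity for `Tv`, whiskered with `T`, gives
`(t ▷ Tv) ≫ ε ≫ c = 𝟙` (`twist_eval_coeval`), so that `ε` is a split monomorphism. As `ε ▷ T` is
also split by `T ◁ η`, both are isomorphisms, and by the first form so is `r ▷ T`. Tensoring with
`Z` on the right finishes the proof.
-/


open CategoryTheory CategoryTheory.Limits CategoryTheory.MonoidalCategory

namespace TwistedTrivialBraiding

variable {C : Type*} [Category C] [MonoidalCategory C] [BraidedCategory C]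
  {T Tv : C} {t : T ⟶ T}

lemma whisker_comm (htt : (β_ T T).hom = T ◁ t) : t ▷ T = T ◁ t := by
  have h := BraidedCategory.braiding_naturality_right T t
  rw [← htt] at h
  exact ((cancel_epi (β_ T T).hom).1 h).symm.trans htt

/-- A strand `T` slid across `η : 𝟙 ⟶ Tv ⊗ T` crosses both strands of `η`. -/
lemma slide (η : 𝟙_ C ⟶ (Tv ⊗ T : C)) :
    η ▷ T ≫ (α_ Tv T T).hom ≫ Tv ◁ (β_ T T).hom ≫ (α_ Tv T T).inv ≫ (β_ Tv T).hom ▷ T =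
      (λ_ T).hom ≫ (ρ_ T).inv ≫ T ◁ η ≫ (α_ T Tv T).inv := by
  have h := BraidedCategory.braiding_naturality_left η T
  have hex := BraidedCategory.hexagon_reverse Tv T T
  rw [← hex, Iso.hom_inv_id_assoc, reassoc_of% h, braiding_tensorUnit_left]
  simp

/-- The crossing of the two strands `T` in `slide`, written as the twist of the strand `T`
belonging to `η`. -/
lemma slide_left (htt : (β_ T T).hom = T ◁ t) (η : 𝟙_ C ⟶ (Tv ⊗ T : C)) :
    (η ≫ Tv ◁ t) ▷ T ≫ (β_ Tv T).hom ▷ T =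
      (λ_ T).hom ≫ (ρ_ T).inv ≫ T ◁ η ≫ (α_ T Tv T).inv := by
  rw [← slide, htt, ← whisker_comm htt]
  simp

/-- The crossing of the two strands `T` in `slide`, written as the twist of the strand `T`
that slides. -/
lemma slide_right (htt : (β_ T T).hom = T ◁ t) (η : 𝟙_ C ⟶ (Tv ⊗ T : C)) :
    T ◁ η ≫ (α_ T Tv T).inv =
      (ρ_ T).hom ≫ t ≫ (λ_ T).inv ≫ (η ≫ (β_ Tv T).hom) ▷ T := by
  have h := slide η
  rw [htt] at h
  have h' : η ▷ T ≫ (α_ Tv T T).hom ≫ Tv ◁ T ◁ t ≫ (α_ Tv T T).inv =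
      (𝟙_ C) ◁ t ≫ η ▷ T := by
    rw [whisker_exchange]; simp
  have h2 : 𝟙_ C ◁ t ≫ (η ≫ (β_ Tv T).hom) ▷ T =
      (λ_ T).hom ≫ (ρ_ T).inv ≫ T ◁ η ≫ (α_ T Tv T).inv := by
    rw [← h, comp_whiskerRight, ← reassoc_of% h']
  rw [← cancel_epi ((λ_ T).hom ≫ (ρ_ T).inv)]
  simp only [Category.assoc]
  rw [← h2]
  simp

/-- The inverse of `t` is the action on `T` of the scalar `η ≫ β ≫ ε : 𝟙 ⟶ 𝟙`; being a scalar
action, it commutes with `t`. -/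
lemma isIso_twist (htt : (β_ T T).hom = T ◁ t)
    (η : 𝟙_ C ⟶ (Tv ⊗ T : C)) (ε : ((T ⊗ Tv : C)) ⟶ 𝟙_ C)
    (t2 : T ◁ η ≫ (α_ T Tv T).inv ≫ ε ▷ T = (ρ_ T).hom ≫ (λ_ T).inv) : IsIso t := by
  have h : t ≫ (λ_ T).inv ≫ (η ≫ (β_ Tv T).hom ≫ ε) ▷ T ≫ (λ_ T).hom = 𝟙 T := by
    rw [← Category.assoc, slide_right htt] at t2
    rw [← cancel_epi (ρ_ T).hom, ← cancel_mono (λ_ T).inv]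
    simpa using t2
  refine ⟨_, h, ?_⟩
  rw [← h]
  simp only [Category.assoc]
  rw [← leftUnitor_naturality, ← whisker_exchange_assoc, leftUnitor_inv_naturality_assoc]

/-- The triangle identity for `Tv`, whiskered with `T`, after `η` has been slid to the left of
`T`. -/
lemma twist_eval_coeval (htt : (β_ T T).hom = T ◁ t)
    (η : 𝟙_ C ⟶ (Tv ⊗ T : C)) (ε : ((T ⊗ Tv : C)) ⟶ 𝟙_ C)
    (t1 : η ▷ Tv ≫ (α_ Tv T Tv).hom ≫ Tv ◁ ε = (λ_ Tv).hom ≫ (ρ_ Tv).inv) :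
    t ▷ Tv ≫ ε ≫ η ≫ (β_ Tv T).hom = 𝟙 (T ⊗ Tv) := by
  set c := η ≫ (β_ Tv T).hom with hc
  have hs := congrArg (fun f => f ▷ Tv) (slide_right htt η)
  rw [← hc] at hs
  have e1 : (ρ_ T).inv ▷ Tv ≫ (T ◁ η ≫ (α_ T Tv T).inv) ▷ Tv ≫ (α_ (T ⊗ Tv) T Tv).hom ≫
      (T ⊗ Tv) ◁ ε ≫ (ρ_ (T ⊗ Tv)).hom = 𝟙 (T ⊗ Tv) := by
    have : (ρ_ T).inv ▷ Tv ≫ (T ◁ η ≫ (α_ T Tv T).inv) ▷ Tv ≫ (α_ (T ⊗ Tv) T Tv).hom ≫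
      (T ⊗ Tv) ◁ ε ≫ (ρ_ (T ⊗ Tv)).hom =
      T ◁ (λ_ Tv).inv ≫ T ◁ (η ▷ Tv ≫ (α_ Tv T Tv).hom ≫ Tv ◁ ε) ≫ T ◁ (ρ_ Tv).hom := by
      monoidal
    rw [this, t1]
    monoidal
  have e2 : (ρ_ T).inv ▷ Tv ≫ ((ρ_ T).hom ≫ t ≫ (λ_ T).inv ≫ c ▷ T) ▷ Tv ≫
      (α_ (T ⊗ Tv) T Tv).hom ≫ (T ⊗ Tv) ◁ ε ≫ (ρ_ (T ⊗ Tv)).hom = t ▷ Tv ≫ ε ≫ c := by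
    have : (ρ_ T).inv ▷ Tv ≫ ((ρ_ T).hom ≫ t ≫ (λ_ T).inv ≫ c ▷ T) ▷ Tv ≫
      (α_ (T ⊗ Tv) T Tv).hom ≫ (T ⊗ Tv) ◁ ε ≫ (ρ_ (T ⊗ Tv)).hom =
      t ▷ Tv ≫ (λ_ (T ⊗ Tv)).inv ≫ (c ▷ (T ⊗ Tv) ≫ (T ⊗ Tv) ◁ ε) ≫ (ρ_ (T ⊗ Tv)).hom := by
      monoidal
    rw [this, ← whisker_exchange]
    monoidal
  rw [← e2, ← e1]
  exact congrArg (fun f => (ρ_ T).inv ▷ Tv ≫ f ≫ (α_ (T ⊗ Tv) T Tv).hom ≫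
      (T ⊗ Tv) ◁ ε ≫ (ρ_ (T ⊗ Tv)).hom) hs.symm

lemma isIso_whiskerLeft_coeval (htt : (β_ T T).hom = T ◁ t)
    (η : 𝟙_ C ⟶ (Tv ⊗ T : C)) (ε : ((T ⊗ Tv : C)) ⟶ 𝟙_ C)
    (t1 : η ▷ Tv ≫ (α_ Tv T Tv).hom ≫ Tv ◁ ε = (λ_ Tv).hom ≫ (ρ_ Tv).inv)
    (t2 : T ◁ η ≫ (α_ T Tv T).inv ≫ ε ▷ T = (ρ_ T).hom ≫ (λ_ T).inv) :
    IsIso (T ◁ η) := by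
  have := isIso_twist htt η ε t2
  have hεc : ε ≫ η ≫ (β_ Tv T).hom = inv (t ▷ Tv) :=
    IsIso.eq_inv_of_hom_inv_id (twist_eval_coeval htt η ε t1)
  have hmono : Mono (ε ▷ T) := by
    have h : ε ▷ T ≫ (η ≫ (β_ Tv T).hom) ▷ T = inv (t ▷ Tv) ▷ T := by
      rw [← comp_whiskerRight, hεc]
    have : Mono (ε ▷ T ≫ (η ≫ (β_ Tv T).hom) ▷ T) := by rw [h]; infer_instance
    exact mono_of_mono _ ((η ≫ (β_ Tv T).hom) ▷ T)
  have hsplit : ((λ_ T).hom ≫ (ρ_ T).inv ≫ T ◁ η ≫ (α_ T Tv T).inv) ≫ ε ▷ T = 𝟙 _ := by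
    simp [t2]
  have : IsSplitEpi (ε ▷ T) := ⟨⟨⟨_, hsplit⟩⟩⟩
  have : IsIso (ε ▷ T) := isIso_of_mono_of_isSplitEpi _
  have h : T ◁ η = ((ρ_ T).hom ≫ (λ_ T).inv) ≫ inv (ε ▷ T) ≫ (α_ T Tv T).hom := by
    rw [← t2]; simp
  rw [h]
  infer_instance

lemma isIso_unit_whiskerRight (htt : (β_ T T).hom = T ◁ t)
    (η : 𝟙_ C ⟶ (Tv ⊗ T : C)) (ε : ((T ⊗ Tv : C)) ⟶ 𝟙_ C)
    (t1 : η ▷ Tv ≫ (α_ Tv T Tv).hom ≫ Tv ◁ ε = (λ_ Tv).hom ≫ (ρ_ Tv).inv)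
    (t2 : T ◁ η ≫ (α_ T Tv T).inv ≫ ε ▷ T = (ρ_ T).hom ≫ (λ_ T).inv) :
    IsIso ((η ≫ Tv ◁ t) ▷ T) := by
  have := isIso_whiskerLeft_coeval htt η ε t1 t2
  have : IsIso ((η ≫ Tv ◁ t) ▷ T ≫ (β_ Tv T).hom ▷ T) := by
    rw [slide_left htt]; infer_instance
  exact IsIso.of_isIso_comp_right _ ((β_ Tv T).hom ▷ T)

end TwistedTrivialBraiding

/-- If `T` has `t`-twisted trivial braiding and a duality datum
`(Tv, η : 𝟙 ⟶ Tv ⊗ T, ε : T ⊗ Tv ⟶ 𝟙)`, and `r = η ≫ (Tv ◁ t)`, then an object `X` is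
`(Tv ⊗ T)`-stable (i.e. `λ_X⁻¹ ≫ (r ▷ X)` is an isomorphism) if and only if `X` is
isomorphic to `T ⊗ Z` for some `Z`. -/
theorem stmt12 {C : Type*} [Category C] [MonoidalCategory C] [BraidedCategory C]
    (T Tv : C) (t : T ⟶ T) (htt : (β_ T T).hom = T ◁ t)
    (η : 𝟙_ C ⟶ (Tv ⊗ T : C)) (ε : ((T ⊗ Tv : C)) ⟶ 𝟙_ C)
    (t1 : η ▷ Tv ≫ (α_ Tv T Tv).hom ≫ Tv ◁ ε = (λ_ Tv).hom ≫ (ρ_ Tv).inv)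
    (t2 : T ◁ η ≫ (α_ T Tv T).inv ≫ ε ▷ T = (ρ_ T).hom ≫ (λ_ T).inv)
    (X : C) :
    IsIso ((λ_ X).inv ≫ ((η ≫ (Tv ◁ t)) ▷ X)) ↔ ∃ Z : C, Nonempty (X ≅ (T ⊗ Z : C)) := by
  constructor
  · intro h
    exact ⟨Tv ⊗ X, ⟨asIso ((λ_ X).inv ≫ ((η ≫ (Tv ◁ t)) ▷ X)) ≪≫
      whiskerRightIso (β_ Tv T) X ≪≫ α_ T Tv X⟩⟩
  · rintro ⟨Z, ⟨e⟩⟩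
    have := TwistedTrivialBraiding.isIso_unit_whiskerRight htt η ε t1 t2
    have hTZ : IsIso ((η ≫ Tv ◁ t) ▷ (T ⊗ Z)) := by
      rw [whiskerRight_tensor]; infer_instance
    have : IsIso ((η ≫ Tv ◁ t) ▷ X) := by
      have h : (η ≫ Tv ◁ t) ▷ X =
          𝟙_ C ◁ e.hom ≫ (η ≫ Tv ◁ t) ▷ (T ⊗ Z) ≫ (Tv ⊗ T) ◁ e.inv := by
        rw [← whisker_exchange, ← whiskerLeft_comp_assoc]; simp
      rw [h]; infer_instance
    infer_instance
end

section
/- Let (C, ⊗, 𝟙) be a braided monoidal semiadditive category: C has a zero object and binary biproducts, and tensoring on either side with any fixed object preserves the zero object and binary biproducts. Suppose (E, r, i) and (E', s, j) are clopen idempotents and the morphisms i : E → 𝟙, r : 𝟙 → E, j : E' → 𝟙, s : 𝟙 → E' (with i ≫ r = 𝟙_E, j ≫ s = 𝟙_{E'}, i ≫ s = 0, j ≫ r = 0) exhibit 𝟙 as a biproduct E ⊕ E'. Then E ⊗ E' is a zero object, and for all objects X, Y the map Hom(X, Y) → Hom(E ⊗ X, E ⊗ Y) × Hom(E' ⊗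 X, E' ⊗ Y) sending f to (E ◁ f, E' ◁ f) is a bijection. -/
open CategoryTheory CategoryTheory.Limits CategoryTheory.MonoidalCategory

/-!
Tensoring the decomposition `𝟙 = E ⊕ E'` on the right with `Y` exhibits `𝟙 ⊗ Y` as the product of
`E ⊗ Y` and `E' ⊗ Y`, with projections `r ▷ Y` and `s ▷ Y`. By the exchange law
`𝟙 ◁ f ≫ r ▷ Y = r ▷ X ≫ E ◁ f`, so `f`, being determined by `𝟙 ◁ f`, is determined by the pair
`(E ◁ f, E' ◁ f)`. Conversely, a pair `(a, b)` induces a map `𝟙 ⊗ X ⟶ 𝟙 ⊗ Y` with components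
`r ▷ X ≫ a` and `s ▷ X ≫ b`; it is `𝟙 ◁ f` for some `f`, and `E ◁ f = a`, `E' ◁ f = b` because
`r ▷ X` and `s ▷ X` are split epimorphisms.

That `E ⊗ E'` is zero follows from `r ▷ E' = (s ≫ j) ▷ E' ≫ r ▷ E' = (s ≫ j ≫ r) ▷ E' = 0`, since
`i ▷ E'` is a section of `r ▷ E'`, and an object whose identity vanishes is zero.
-/

/-- Right whiskering of a biproduct decomposition of the unit is a product cone. -/
lemma exists_isLimit_whiskerRight {C : Type*} [Category C] [MonoidalCategory C]
    [HasZeroMorphisms C] (Z : C) [(tensorRight Z).PreservesZeroMorphisms]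
    [PreservesBinaryBiproducts (tensorRight Z)]
    {E E' : C} {r : 𝟙_ C ⟶ E} {i : E ⟶ 𝟙_ C} {s : 𝟙_ C ⟶ E'} {j : E' ⟶ 𝟙_ C}
    (hir : i ≫ r = 𝟙 E) (hjs : j ≫ s = 𝟙 E') (his : i ≫ s = 0) (hjr : j ≫ r = 0)
    (hprod : Nonempty (IsLimit (BinaryFan.mk r s)))
    (hcoprod : Nonempty (IsColimit (BinaryCofan.mk i j))) :
    Nonempty (IsLimit (BinaryFan.mk (r ▷ Z) (s ▷ Z))) := by
  let b : BinaryBicone E E' :=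
    { pt := 𝟙_ C, fst := r, snd := s, inl := i, inr := j
      inl_fst := hir, inl_snd := his, inr_fst := hjr, inr_snd := hjs }
  have hb : b.IsBilimit := ⟨hprod.some, hcoprod.some⟩
  exact ⟨(isBinaryBilimitOfPreserves (tensorRight Z) hb).isLimit⟩

/-- In a braided monoidal semiadditive category, if `(E, r, i)` and `(E', s, j)` are
clopen idempotents exhibiting `𝟙` as a biproduct `E ⊕ E'`, then `E ⊗ E'` is a zero
object and `Hom(X,Y) → Hom(E ⊗ X, E ⊗ Y) × Hom(E' ⊗ X, E' ⊗ Y)`,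
`f ↦ (E ◁ f, E' ◁ f)`, is a bijection. -/
theorem stmt13 {C : Type*} [Category C] [MonoidalCategory C] [BraidedCategory C]
    [HasZeroObject C] [HasZeroMorphisms C] [HasBinaryBiproducts C]
    [∀ Z : C, (tensorLeft Z).PreservesZeroMorphisms]
    [∀ Z : C, (tensorRight Z).PreservesZeroMorphisms]
    [∀ Z : C, PreservesBinaryBiproducts (tensorLeft Z)]
    [∀ Z : C, PreservesBinaryBiproducts (tensorRight Z)]
    (E E' : C) (r : 𝟙_ C ⟶ E) (i : E ⟶ 𝟙_ C) (s : 𝟙_ C ⟶ E') (j : E' ⟶ 𝟙_ C)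
    (hir : i ≫ r = 𝟙 E) (hstabE : (r ≫ i) ▷ E = 𝟙 ((𝟙_ C ⊗ E : C)))
    (hjs : j ≫ s = 𝟙 E') (hstabE' : (s ≫ j) ▷ E' = 𝟙 ((𝟙_ C ⊗ E' : C)))
    (his : i ≫ s = 0) (hjr : j ≫ r = 0)
    (hprod : Nonempty (IsLimit (BinaryFan.mk r s)))
    (hcoprod : Nonempty (IsColimit (BinaryCofan.mk i j))) :
    IsZero ((E ⊗ E' : C)) ∧
    ∀ X Y : C, Function.Bijective
      (fun f : X ⟶ Y =>
        ((E ◁ f, E' ◁ f) : ((E ⊗ X : C) ⟶ (E ⊗ Y : C)) × ((E' ⊗ X : C) ⟶ (E' ⊗ Y : C)))) := by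
  have hlim := fun Y : C => exists_isLimit_whiskerRight Y hir hjs his hjr hprod hcoprod
  refine ⟨?_, fun X Y => ⟨fun f g hfg => ?_, fun ⟨a, b⟩ => ?_⟩⟩
  · have hr : r ▷ E' = 0 := by
      calc r ▷ E' = (s ≫ j) ▷ E' ≫ r ▷ E' := by rw [hstabE', Category.id_comp]
        _ = (s ≫ j ≫ r) ▷ E' := by rw [← comp_whiskerRight, Category.assoc]
        _ = 0 := by
          rw [hjr, comp_zero]
          exact (tensorRight E').map_zero _ _
    rw [IsZero.iff_id_eq_zero, ← id_whiskerRight, ← hir, comp_whiskerRight, hr, comp_zero]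
  · obtain ⟨h⟩ := hlim Y
    obtain ⟨h₁, h₂⟩ := Prod.mk.inj hfg
    have key : 𝟙_ C ◁ f = 𝟙_ C ◁ g := by
      refine BinaryFan.IsLimit.hom_ext h ?_ ?_
      · change 𝟙_ C ◁ f ≫ r ▷ Y = 𝟙_ C ◁ g ≫ r ▷ Y
        rw [whisker_exchange, whisker_exchange, h₁]
      · change 𝟙_ C ◁ f ≫ s ▷ Y = 𝟙_ C ◁ g ≫ s ▷ Y
        rw [whisker_exchange, whisker_exchange, h₂]
    simpa [id_whiskerLeft] using key
  · obtain ⟨h⟩ := hlim Y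
    obtain ⟨l, hl₁, hl₂⟩ := BinaryFan.IsLimit.lift' h (r ▷ X ≫ a) (s ▷ X ≫ b)
    change l ≫ r ▷ Y = _ at hl₁
    change l ≫ s ▷ Y = _ at hl₂
    have hf : 𝟙_ C ◁ ((λ_ X).inv ≫ l ≫ (λ_ Y).hom) = l := by simp [id_whiskerLeft]
    refine ⟨(λ_ X).inv ≫ l ≫ (λ_ Y).hom, Prod.ext ?_ ?_⟩
    · have : IsSplitEpi (r ▷ X) := ⟨⟨⟨i ▷ X, by rw [← comp_whiskerRight, hir, id_whiskerRight]⟩⟩⟩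
      rw [← cancel_epi (r ▷ X), ← whisker_exchange, hf, hl₁]
    · have : IsSplitEpi (s ▷ X) := ⟨⟨⟨j ▷ X, by rw [← comp_whiskerRight, hjs, id_whiskerRight]⟩⟩⟩
      rw [← cancel_epi (s ▷ X), ← whisker_exchange, hf, hl₂]
end

section
/- Let (C, ⊗, 𝟙) be a braided monoidal semiadditive category: C has a zero object and binary biproducts, and tensoring on either side with any fixed object preserves the zero object and binary biproducts. Suppose (E, r, i) is a clopen idempotent and the morphisms i : E → 𝟙, r : 𝟙 → E, j : E' → 𝟙, s : 𝟙 → E' (with i ≫ r = 𝟙_E, j ≫ s = 𝟙_{E'}, i ≫ s = 0, j ≫ r = 0) exhibit 𝟙 as a biproduct E ⊕ E'. Then (E', s, j) is also a clopen idempotent: j ≫ s = 𝟙_{E'} and (s ≫ j) ▷ E' = 𝟙_{𝟙 ⊗ E'}. -/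
/-!
Every retract of the unit is stable. Write `f = s ≫ j`, an endomorphism of the unit.
By the interchange law `f ▷ E' ≫ 𝟙_ C ◁ j = 𝟙_ C ◁ j ≫ f ▷ 𝟙_ C`, and since `λ` and `ρ` agree at the
unit, the right-hand side is `j ≫ f = j ≫ s ≫ j = j` conjugated by unitors, i.e. `𝟙_ C ◁ j`.
The morphism `𝟙_ C ◁ j` is a split monomorphism with retraction `𝟙_ C ◁ s`, so `f ▷ E' = 𝟙`.
-/

open CategoryTheory CategoryTheory.Limits CategoryTheory.MonoidalCategory

/-- A retract of the unit is a stable idempotent: the induced idempotent of the unit acts as the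
identity on the retract. -/
lemma retract_whiskerRight_eq_id {C : Type*} [Category C] [MonoidalCategory C]
    {X : C} (s : 𝟙_ C ⟶ X) (j : X ⟶ 𝟙_ C) (hjs : j ≫ s = 𝟙 X) :
    (s ≫ j) ▷ X = 𝟙 ((𝟙_ C ⊗ X : C)) := by
  have hsplit : 𝟙_ C ◁ j ≫ 𝟙_ C ◁ s = 𝟙 ((𝟙_ C ⊗ X : C)) := by
    rw [← whiskerLeft_comp, hjs, whiskerLeft_id]
  have habsorb : (s ≫ j) ▷ X ≫ 𝟙_ C ◁ j = 𝟙_ C ◁ j := by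
    rw [← whisker_exchange, whiskerRight_id, id_whiskerLeft]
    simp [reassoc_of% hjs, unitors_inv_equal]
  calc (s ≫ j) ▷ X = ((s ≫ j) ▷ X ≫ 𝟙_ C ◁ j) ≫ 𝟙_ C ◁ s := by
        rw [Category.assoc, hsplit, Category.comp_id]
    _ = 𝟙 _ := by rw [habsorb, hsplit]

/-- In a braided monoidal semiadditive category, if `(E, r, i)` is a clopen idempotent
and `i, r, j, s` exhibit `𝟙` as a biproduct `E ⊕ E'`, then `(E', s, j)` is also a clopen
idempotent. -/
theorem stmt14 {C : Type*} [Category C] [MonoidalCategory C] [BraidedCategory C]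
    [HasZeroObject C] [HasZeroMorphisms C] [HasBinaryBiproducts C]
    [∀ Z : C, (tensorLeft Z).PreservesZeroMorphisms]
    [∀ Z : C, (tensorRight Z).PreservesZeroMorphisms]
    [∀ Z : C, PreservesBinaryBiproducts (tensorLeft Z)]
    [∀ Z : C, PreservesBinaryBiproducts (tensorRight Z)]
    (E E' : C) (r : 𝟙_ C ⟶ E) (i : E ⟶ 𝟙_ C) (s : 𝟙_ C ⟶ E') (j : E' ⟶ 𝟙_ C)
    (hir : i ≫ r = 𝟙 E) (hstabE : (r ≫ i) ▷ E = 𝟙 ((𝟙_ C ⊗ E : C)))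
    (hjs : j ≫ s = 𝟙 E')
    (his : i ≫ s = 0) (hjr : j ≫ r = 0)
    (hprod : Nonempty (IsLimit (BinaryFan.mk r s)))
    (hcoprod : Nonempty (IsColimit (BinaryCofan.mk i j))) :
    j ≫ s = 𝟙 E' ∧ (s ≫ j) ▷ E' = 𝟙 ((𝟙_ C ⊗ E' : C)) :=
  ⟨hjs, retract_whiskerRight_eq_id s j hjs⟩
end

section
/- Let (C, ⊗, 𝟙) be a preadditive monoidal category in which tensoring is additive in each variable (monoidal preadditive), which has cokernels, and in which tensoring on either side with any fixed object preserves cokernels. Fix a natural number m, let S/m denote the cokernel of m • 𝟙_𝟙 : 𝟙 → 𝟙, and let π : 𝟙 → S/m be the cokernel projection. Then: (a) S/m is a closed idempotent, i.e. λ_{S/m}⁻¹ ≫ (π ▷ S/m) : S/m → S/m ⊗ S/m is an isomorphism; and (b) for all objects X, D, precomposition with ρ_X⁻¹ ≫ (X ◁ π) : X → X ⊗ S/m gives an injective map Hom(X ⊗ S/m, D) → Hom(X, D) whose image is exactly the m-torsion subgroup {f : X → D | m • f = 0}. -/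
/-!
An additive functor `F` preserving the cokernel `π : 𝟙 ⟶ S/m` of `m • 𝟙` sends `π` to a cokernel
of `m • 𝟙` on `F 𝟙` (`isColimitMap`), that is, to the universal morphism out of `F 𝟙`
annihilated by `m`: morphisms out of `F (S/m)` are exactly the `m`-torsion morphisms out of `F 𝟙`.
For `F = X ⊗ -`, transported along `ρ_X`, this is the description of `Hom(X ⊗ S/m, D)`.
For `F = - ⊗ S/m`, the object `F 𝟙 ≅ S/m` is itself annihilated by `m`, so `π ▷ S/m` is the
cokernel of the zero morphism, hence an isomorphism.
-/

open CategoryTheory CategoryTheory.Limits CategoryTheory.MonoidalCategory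

/-- Multiplication by `m` vanishes on the cokernel of `m • 𝟙 A`, since it does so after
precomposition with the projection, an epimorphism. -/
lemma nsmul_id_cokernel {C : Type*} [Category C] [Preadditive C] (A : C) (m : ℕ)
    [HasCokernel (m • 𝟙 A)] : m • 𝟙 (cokernel (m • 𝟙 A)) = 0 := by
  rw [← cancel_epi (cokernel.π (m • 𝟙 A)), Preadditive.comp_nsmul, Category.comp_id, comp_zero]
  simpa only [Preadditive.nsmul_comp, Category.id_comp] using cokernel.condition (m • 𝟙 A)

/-- The image under `F` of the cokernel condition, with `F.map (m • 𝟙 A)` rewritten as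
`m • 𝟙 (F.obj A)`. -/
lemma nsmul_id_comp_map_π {C E : Type*} [Category C] [Category E] [Preadditive C] [Preadditive E]
    (F : C ⥤ E) [F.Additive] (A : C) (m : ℕ) [HasCokernel (m • 𝟙 A)] :
    (m • 𝟙 (F.obj A)) ≫ F.map (cokernel.π (m • 𝟙 A)) = 0 := by
  rw [← F.map_id, ← F.map_nsmul, ← F.map_comp, cokernel.condition, F.map_zero]

/-- An additive functor preserving the cokernel of `m • 𝟙 A` sends it to a cokernel of
`m • 𝟙 (F A)`. -/
noncomputable def isColimitMap {C E : Type*} [Category C] [Category E] [Preadditive C]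
    [Preadditive E] (F : C ⥤ E) [F.Additive] (A : C) (m : ℕ) [HasCokernel (m • 𝟙 A)]
    [PreservesColimit (parallelPair (m • 𝟙 A) 0) F] :
    IsColimit (CokernelCofork.ofπ _ (nsmul_id_comp_map_π F A m)) :=
  isCokernelEpiComp
    (CokernelCofork.mapIsColimit _ (cokernelIsCokernel (m • 𝟙 A)) F) (𝟙 _)
    (by simp [F.map_nsmul])

/-- In a monoidal preadditive category with cokernels preserved by tensoring on both
sides, the cokernel `S/m` of `m • 𝟙_𝟙` is a closed idempotent, and precomposition with
`ρ_X⁻¹ ≫ (X ◁ π)` injects `Hom(X ⊗ S/m, D)` into `Hom(X, D)` with image exactly the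
`m`-torsion morphisms. -/
theorem stmt15 {C : Type*} [Category C] [Preadditive C] [MonoidalCategory C]
    [MonoidalPreadditive C] [HasCokernels C]
    (hL : ∀ (Z A B : C) (f : A ⟶ B), PreservesColimit (parallelPair f 0) (tensorLeft Z))
    (hR : ∀ (Z A B : C) (f : A ⟶ B), PreservesColimit (parallelPair f 0) (tensorRight Z))
    (m : ℕ) :
    IsIso ((λ_ (cokernel (m • 𝟙 (𝟙_ C)))).inv
        ≫ (cokernel.π (m • 𝟙 (𝟙_ C)) ▷ cokernel (m • 𝟙 (𝟙_ C)))) ∧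
    ∀ X D : C,
      Function.Injective
        (fun f : ((X ⊗ cokernel (m • 𝟙 (𝟙_ C)) : C)) ⟶ D =>
          ((ρ_ X).inv ≫ (X ◁ cokernel.π (m • 𝟙 (𝟙_ C)))) ≫ f) ∧
      Set.range
        (fun f : ((X ⊗ cokernel (m • 𝟙 (𝟙_ C)) : C)) ⟶ D =>
          ((ρ_ X).inv ≫ (X ◁ cokernel.π (m • 𝟙 (𝟙_ C)))) ≫ f)
        = {f : X ⟶ D | m • f = 0} := by
  set S := cokernel (m • 𝟙 (𝟙_ C))
  set π : 𝟙_ C ⟶ S := cokernel.π (m • 𝟙 (𝟙_ C))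
  constructor
  · have := hR S _ _ (m • 𝟙 (𝟙_ C))
    -- `𝟙 ⊗ S/m` is killed by `m`, because `S/m` is.
    have hS : m • 𝟙 (𝟙_ C ⊗ S) = 0 := by
      have h : (λ_ S).hom ≫ (m • 𝟙 S) ≫ (λ_ S).inv = 0 := by
        rw [nsmul_id_cokernel, zero_comp, comp_zero]
      simpa only [Preadditive.nsmul_comp, Preadditive.comp_nsmul, Category.id_comp,
        Iso.hom_inv_id] using h
    have hπ : IsIso (π ▷ S) :=
      CokernelCofork.IsColimit.isIso_π _ (isColimitMap (tensorRight S) (𝟙_ C) m) hS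
    infer_instance
  · intro X D
    have := hL X _ _ (m • 𝟙 (𝟙_ C))
    have hc := isColimitMap (tensorLeft X) (𝟙_ C) m
    have hepi : Epi (X ◁ π) := Cofork.IsColimit.epi hc
    refine ⟨fun f g h => (cancel_epi ((ρ_ X).inv ≫ X ◁ π)).1 h, Set.ext fun f => ⟨?_, fun hf => ?_⟩⟩
    · rintro ⟨g, rfl⟩
      have h : (m • 𝟙 (X ⊗ 𝟙_ C)) ≫ X ◁ π = 0 := nsmul_id_comp_map_π (tensorLeft X) (𝟙_ C) m
      rw [Preadditive.nsmul_comp, Category.id_comp] at h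
      change m • (((ρ_ X).inv ≫ X ◁ π) ≫ g) = 0
      rw [← Preadditive.nsmul_comp, ← Preadditive.comp_nsmul, h, comp_zero, zero_comp]
    · have hf' : (m • 𝟙 (X ⊗ 𝟙_ C)) ≫ (ρ_ X).hom ≫ f = 0 := by
        rw [Preadditive.nsmul_comp, Category.id_comp, ← Preadditive.comp_nsmul, hf, comp_zero]
      obtain ⟨g, hg⟩ := CokernelCofork.IsColimit.desc' hc _ hf'
      have hg' : X ◁ π ≫ g = (ρ_ X).hom ≫ f := hg
      exact ⟨g, by simp only [Category.assoc, hg', Iso.inv_hom_id_assoc]⟩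
end

section
/- Let (C, ⊗, 𝟙) be a symmetric monoidal category that is idempotent complete (every idempotent endomorphism splits). If an object X admits a right dual and Y is a retract of X — i.e. there are morphisms i : Y → X and p : X → Y with i ≫ p = 𝟙_Y — then Y admits a right dual. -/
/-!
The idempotent `e = p ≫ i` of `X` has a right adjoint mate `eᘁ : Xd ⟶ Xd`, which is again idempotent
by contravariant functoriality of mates (`comp_rightAdjointMate`). Splitting it as `eᘁ = r ≫ s`
through an object `Yd` gives the dual of `Y`: the coevaluation is `η` followed by `p` and `r`, and
the evaluation is `s` and `i` followed by `ε`. In the first triangle identity, the composite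
`r ≫ s = eᘁ` is moved across `ε`, where it becomes `e` and is absorbed by `i`; what remains is
`i ≫ p = 𝟙 Y` around a triangle for `X`. In the second, the composite `p ≫ i = e` sits between `η`
and `ε`, so that the zigzag is `eᘁ` by definition, and `s ≫ eᘁ ≫ r = 𝟙 Yd`.
-/

open CategoryTheory CategoryTheory.Limits CategoryTheory.MonoidalCategory

/-- In an idempotent complete symmetric monoidal category, a retract `Y` of an object
`X` admitting a right dual also admits a right dual. -/
theorem stmt19 {C : Type*} [Category C] [MonoidalCategory C] [SymmetricCategory C]
    [IsIdempotentComplete C]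
    (X Y Xd : C)
    (η : 𝟙_ C ⟶ (X ⊗ Xd : C)) (ε : ((Xd ⊗ X : C)) ⟶ 𝟙_ C)
    (t1 : η ▷ X ≫ (α_ X Xd X).hom ≫ X ◁ ε = (λ_ X).hom ≫ (ρ_ X).inv)
    (t2 : Xd ◁ η ≫ (α_ Xd X Xd).inv ≫ ε ▷ Xd = (ρ_ Xd).hom ≫ (λ_ Xd).inv)
    (i : Y ⟶ X) (p : X ⟶ Y) (hip : i ≫ p = 𝟙 Y) :
    ∃ (Yd : C) (η' : 𝟙_ C ⟶ (Y ⊗ Yd : C)) (ε' : ((Yd ⊗ Y : C)) ⟶ 𝟙_ C),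
      η' ▷ Y ≫ (α_ Y Yd Y).hom ≫ Y ◁ ε' = (λ_ Y).hom ≫ (ρ_ Y).inv ∧
      Yd ◁ η' ≫ (α_ Yd Y Yd).inv ≫ ε' ▷ Yd = (ρ_ Yd).hom ≫ (λ_ Yd).inv := by
  let : ExactPairing X Xd := ⟨η, ε, t2, t1⟩
  let : HasRightDual X := ⟨Xd⟩
  let m : Xd ⟶ Xd := rightAdjointMate (p ≫ i)
  have hm : m = (ρ_ Xd).inv ≫ Xd ◁ η ≫ Xd ◁ (p ≫ i) ▷ Xd ≫ (α_ _ _ _).inv ≫ ε ▷ Xd ≫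
      (λ_ Xd).hom := rfl
  have hmm : m ≫ m = m := by
    have h := comp_rightAdjointMate (f := p ≫ i) (g := p ≫ i)
    rw [Category.assoc, reassoc_of% hip] at h
    exact h.symm
  have hmε : m ▷ X ≫ ε = Xd ◁ (p ≫ i) ≫ ε := rightAdjointMate_comp_evaluation (p ≫ i)
  obtain ⟨Yd, s, r, hsr, hrs⟩ := IsIdempotentComplete.idempotents_split Xd m hmm
  have t1' : η ▷ X ⊗≫ X ◁ ε = ⊗𝟙.hom := ExactPairing.evaluation_coevaluation'' X Xd
  refine ⟨Yd, η ≫ p ▷ Xd ≫ Y ◁ r, s ▷ Y ≫ Xd ◁ i ≫ ε, ?_, ?_⟩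
  ·
    -- Moving `r ≫ s` across `ε` lets `i` absorb it.
    have key : (r ≫ s) ▷ Y ≫ Xd ◁ i ≫ ε = Xd ◁ i ≫ ε := by
      rw [hrs, ← whisker_exchange_assoc, hmε, ← whiskerLeft_comp_assoc, reassoc_of% hip]
    calc
      _ = η ▷ Y ⊗≫ p ▷ (Xd ⊗ Y) ⊗≫ Y ◁ ((r ≫ s) ▷ Y ≫ Xd ◁ i ≫ ε) := by monoidal
      _ = η ▷ Y ⊗≫ (p ▷ (Xd ⊗ Y) ≫ Y ◁ (Xd ◁ i ≫ ε)) := by rw [key]; monoidal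
      _ = (η ▷ Y ≫ (X ⊗ Xd) ◁ i) ⊗≫ X ◁ ε ≫ p ▷ 𝟙_ C := by
        rw [← whisker_exchange]; monoidal
      _ = 𝟙 _ ⊗≫ i ⊗≫ (η ▷ X ⊗≫ X ◁ ε) ⊗≫ p ⊗≫ 𝟙 _ := by
        rw [← whisker_exchange]; monoidal
      _ = 𝟙 _ ⊗≫ (i ≫ p) ⊗≫ 𝟙 _ := by rw [t1']; monoidal
      _ = _ := by rw [hip]; monoidal
  · calc
      _ = 𝟙 _ ⊗≫ Yd ◁ η ⊗≫ Yd ◁ p ▷ Xd ⊗≫ ((Yd ⊗ Y) ◁ r ≫ (s ▷ Y ≫ Xd ◁ i ≫ ε) ▷ Yd) := by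
        monoidal
      _ = 𝟙 _ ⊗≫ Yd ◁ η ⊗≫ (Yd ◁ (p ≫ i) ▷ Xd) ⊗≫ (s ▷ X ≫ ε) ▷ Xd ⊗≫ r ⊗≫ 𝟙 _ := by
        rw [whisker_exchange, ← whisker_exchange_assoc s i]; monoidal
      _ = 𝟙 _ ⊗≫ (Yd ◁ (η ≫ (p ≫ i) ▷ Xd) ≫ s ▷ (X ⊗ Xd)) ⊗≫ ε ▷ Xd ⊗≫ r ⊗≫ 𝟙 _ := by
        monoidal
      _ = (ρ_ Yd).hom ≫ (s ≫ ((ρ_ Xd).inv ≫ Xd ◁ η ≫ Xd ◁ (p ≫ i) ▷ Xd ≫ (α_ _ _ _).inv ≫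
          ε ▷ Xd ≫ (λ_ Xd).hom) ≫ r) ≫ (λ_ Yd).inv := by
        rw [whisker_exchange]; monoidal
      _ = _ := by
        -- The zigzag is the mate `m = r ≫ s`.
        rw [← hm, ← hrs]; simp [hsr]
end
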